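/- There is a universal constant c > 0 with the following property. Fix integers d ≥ 1 and reals γ, α, β, ε ∈ (0, 1/2), and set T = ⌈320 γ^{−2} ln(8/α)⌉ and m = ⌈(16/α²) · d · (ln(4√d/γ) + ln(1/β))⌉. Then for every n ≥ (c · m / ε) · (8√T/γ)^T · ln(2m(8√T/γ)^T / β), there exist a positive integer k, an ε-differentially private mechanism A mapping databases of n unit vectors in ℝ^d to points of ℝ^k, and a function Eval : ℝ^k × {y ∈ ℝ^d : ‖y‖₂ = 1} → ℝ, such that for every database D of n unit vectors in ℝ^d, with probability at least 1 − β over o = A(D): every unit vector y ∈ ℝ^d whose halfspace query f_y has margin γ with respect to D satisfies |Eval(o, y) − f_y(D)| ≤ α. -/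

import Mathlib

attribute [local instance] Classical.propDecidable

open MeasureTheory RealInnerProductSpace

/-- The halfspace query `f_y` evaluated on a database `D` (a multiset of vectors in ℝ^d):
the fraction of elements `x` of `D` with `⟨x, y⟩ > 0`. -/
noncomputable def hquery {d : ℕ} (y : EuclideanSpace ℝ (Fin d))
    (D : Multiset (EuclideanSpace ℝ (Fin d))) : ℝ :=
  ((D.filter (fun x => 0 < ⟪x, y⟫)).card : ℝ) / (D.card : ℝ)

/-- Two databases (multisets) are neighbors if one is obtained from the other by replacing
a single element. -/
def Neighbor {X : Type*} (D D' : Multiset X) : Prop :=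
  ∃ (D₀ : Multiset X) (x y : X), D = x ::ₘ D₀ ∧ D' = y ::ₘ D₀

/-! Tensor features -/
noncomputable def tens {N : ℕ} {J : Type} [Fintype J] (u : Fin N → J → ℝ) :
    EuclideanSpace ℝ (Fin N → J) := WithLp.toLp 2 (fun i => ∏ l, u l (i l))

lemma inner_tens {N : ℕ} {J : Type} [Fintype J] (u v : Fin N → J → ℝ) :
    ⟪tens u, tens v⟫ = ∏ l, ∑ j, u l j * v l j := by
  rw [Finset.prod_univ_sum]
  simp only [tens, PiLp.inner_apply, Fintype.piFinset_univ, Finset.prod_mul_distrib]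
  refine Finset.sum_congr rfl fun i _ => ?_
  simp [mul_comm]

noncomputable def lft {d : ℕ} (x : EuclideanSpace ℝ (Fin d)) : Option (Fin d) → ℝ
  | none => (Real.sqrt 2)⁻¹
  | some j => (Real.sqrt 2)⁻¹ * x j

lemma lft_dot {d : ℕ} (x y : EuclideanSpace ℝ (Fin d)) :
    ∑ j, lft x j * lft y j = (1 + ⟪x, y⟫) / 2 := by
  have h : (Real.sqrt 2)⁻¹ * (Real.sqrt 2)⁻¹ = 1 / 2 := by
    rw [← mul_inv, Real.mul_self_sqrt (by norm_num)]; norm_num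
  rw [Fintype.sum_option]
  simp only [lft, PiLp.inner_apply]
  have : ∀ j, (Real.sqrt 2)⁻¹ * x j * ((Real.sqrt 2)⁻¹ * y j) = 1 / 2 * (y j * x j) := by
    intro j; rw [← h]; ring
  simp only [this, ← Finset.mul_sum, h]
  simp
  simp only [mul_comm (y.ofLp _)]
  ring

noncomputable def Phi {d : ℕ} (N : ℕ) (x : EuclideanSpace ℝ (Fin d)) :
    EuclideanSpace ℝ (Fin N → Option (Fin d)) := tens (fun _ => lft x)

noncomputable def wvec {d : ℕ} (M : ℕ) (y : EuclideanSpace ℝ (Fin d)) :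
    EuclideanSpace ℝ (Fin (2 * M) → Option (Fin d)) :=
  ∑ b : Fin (2 * M) → Bool, if M < (Finset.univ.filter (fun l => b l = true)).card then
    tens (fun l => lft (if b l = true then y else -y)) else 0

lemma inner_Phi {d N : ℕ} (x y : EuclideanSpace ℝ (Fin d)) :
    ⟪Phi N x, Phi N y⟫ = ((1 + ⟪x, y⟫) / 2) ^ N := by
  simp only [Phi, inner_tens, lft_dot, Finset.prod_const, Finset.card_univ, Fintype.card_fin]

lemma inner_bd {d : ℕ} {x y : EuclideanSpace ℝ (Fin d)} (hx : ‖x‖ ≤ 1) (hy : ‖y‖ ≤ 1) :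
    |⟪x, y⟫| ≤ 1 :=
  (abs_real_inner_le_norm x y).trans (mul_le_one₀ hx (norm_nonneg _) hy)

lemma norm_Phi_le {d N : ℕ} {x : EuclideanSpace ℝ (Fin d)} (hx : ‖x‖ ≤ 1) : ‖Phi N x‖ ≤ 1 := by
  have h := inner_Phi (N := N) x x
  rw [real_inner_self_eq_norm_sq] at h
  have h2 := abs_le.1 (inner_bd hx hx)
  have : ((1 + ⟪x, x⟫) / 2) ^ N ≤ 1 := pow_le_one₀ (by linarith) (by linarith)
  nlinarith [norm_nonneg (Phi N x)]

lemma norm_wvec_le {d M : ℕ} {y : EuclideanSpace ℝ (Fin d)} (hy : ‖y‖ = 1) :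
    ‖wvec M y‖ ≤ 2 ^ (2 * M) := by
  have key : ∀ b : Fin (2 * M) → Bool,
      ‖tens (fun l => lft (if b l = true then y else -y))‖ ≤ 1 := by
    intro b
    have h := inner_tens (fun l => lft (if b l = true then y else -y))
      (fun l => lft (if b l = true then y else -y))
    rw [real_inner_self_eq_norm_sq] at h
    have : ∀ l, ∑ j, lft (if b l = true then y else -y) j * lft (if b l = true then y else -y) j
      = 1 := by
      intro l
      rw [lft_dot, real_inner_self_eq_norm_sq]
      split_ifs <;> simp [hy]
    simp only [this] at h
    simp at h
    rcases h with h | h <;> linarith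
  refine (norm_sum_le _ _).trans ?_
  refine (Finset.sum_le_card_nsmul _ _ 1 ?_).trans ?_
  · intro b _
    split_ifs
    · exact key b
    · simp
  · simp

lemma inner_wvec {d M : ℕ} (x y : EuclideanSpace ℝ (Fin d)) :
    ⟪Phi (2 * M) x, wvec M y⟫ = ∑ b : Fin (2 * M) → Bool,
      if M < (Finset.univ.filter (fun l => b l = true)).card then
       ∏ l, (if b l = true then (1 + ⟪x, y⟫) / 2 else (1 - ⟪x, y⟫) / 2) else 0 := by
  rw [wvec, inner_sum]
  refine Finset.sum_congr rfl fun b _ => ?_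
  split_ifs
  · rw [Phi, inner_tens]
    refine Finset.prod_congr rfl fun l _ => ?_
    rw [lft_dot]
    split_ifs
    · rfl
    · rw [inner_neg_right]; ring
  · simp

lemma word_prod {M : ℕ} (p q : ℝ) (hq : 0 ≤ q) (hpq : q ≤ p) (b : Fin (2 * M) → Bool)
    (hb : (Finset.univ.filter (fun l => b l = true)).card ≤ M) :
    ∏ l, (if b l = true then p else q) ≤ (p * q) ^ M := by
  rw [Finset.prod_ite]
  simp only [Finset.prod_const]
  have hc := Finset.card_filter_add_card_filter_not (s := (Finset.univ : Finset (Fin (2*M))))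
    (fun l => b l = true)
  simp only [Finset.card_univ, Fintype.card_fin] at hc
  generalize (Finset.univ.filter (fun l => b l = true)).card = a at *
  obtain ⟨e, rfl⟩ := Nat.exists_eq_add_of_le hb
  have h2 : (Finset.univ.filter (fun l => ¬ b l = true)).card = a + 2 * e := by omega
  rw [h2]
  calc p ^ a * q ^ (a + 2 * e) = (p * q) ^ a * (q * q) ^ e := by
        rw [pow_add, pow_mul, mul_pow, sq]; ring
    _ ≤ (p * q) ^ a * (p * q) ^ e := by
        have : 0 ≤ p := hq.trans hpq
        gcongr
    _ = _ := by rw [← pow_add]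

lemma sum_words {M : ℕ} (p q : ℝ) :
    ∑ b : Fin (2 * M) → Bool, ∏ l, (if b l = true then p else q) = (p + q) ^ (2 * M) := by
  have := Finset.prod_univ_sum (fun _ : Fin (2 * M) => (Finset.univ : Finset Bool))
    (fun _ b => if b = true then p else q)
  simp only [Fintype.piFinset_univ] at this
  rw [← this]
  simp

lemma tail_words {M : ℕ} (t : ℝ) (h0 : 0 ≤ t) (h1 : t ≤ 1) (P : (Fin (2 * M) → Bool) → Prop)
    (hP : ∀ b, P b → (Finset.univ.filter (fun l => b l = true)).card ≤ M) :
    ∑ b : Fin (2 * M) → Bool, (if P b then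
      ∏ l, (if b l = true then (1 + t) / 2 else (1 - t) / 2) else 0) ≤ Real.exp (- (t ^ 2 * M)) := by
  calc _ ≤ ∑ b : Fin (2 * M) → Bool, ((1 + t) / 2 * ((1 - t) / 2)) ^ M := by
        refine Finset.sum_le_sum fun b _ => ?_
        split_ifs with h
        · exact word_prod _ _ (by linarith) (by linarith) b (hP b h)
        · have : 0 ≤ (1 - t) := by linarith
          positivity
    _ = (1 - t ^ 2) ^ M := by
        simp only [Finset.sum_const, Finset.card_univ, Fintype.card_fun, Fintype.card_bool,
          Fintype.card_fin, nsmul_eq_mul]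
        push_cast
        rw [pow_mul, ← mul_pow]
        congr 1; ring
    _ ≤ (Real.exp (- t ^ 2)) ^ M := by
        apply pow_le_pow_left₀
        · nlinarith
        · have := Real.add_one_le_exp (- t ^ 2); linarith
    _ = _ := by rw [← Real.exp_nat_mul]; congr 1; ring

lemma approx {d M : ℕ} {x y : EuclideanSpace ℝ (Fin d)} (hx : ‖x‖ = 1) (hy : ‖y‖ = 1)
    {γ : ℝ} (hγ : 0 < γ) (hm : γ ≤ |⟪x, y⟫|) :
    |⟪Phi (2 * M) x, wvec M y⟫ - (if 0 < ⟪x, y⟫ then 1 else 0)| ≤ Real.exp (- (γ ^ 2 * M)) := by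
  have hb := inner_bd hx.le hy.le
  rw [inner_wvec]
  set t := ⟪x, y⟫
  have hmono : Real.exp (- (|t| ^ 2 * M)) ≤ Real.exp (- (γ ^ 2 * M)) := by
    rw [Real.exp_le_exp]
    gcongr
  refine le_trans ?_ hmono
  have hnn : ∀ b : Fin (2 * M) → Bool, 0 ≤ ∏ l, (if b l = true then (1 + t) / 2 else (1 - t) / 2) := by
    intro b
    have := abs_le.1 hb
    refine Finset.prod_nonneg fun l _ => ?_
    split_ifs <;> linarith
  split_ifs with ht
  · rw [abs_of_pos ht] at *
    have hs := sum_words (M := M) ((1 + t) / 2) ((1 - t) / 2)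
    have e1 : (1 + t) / 2 + (1 - t) / 2 = 1 := by ring
    rw [e1, one_pow] at hs
    have ht2 := tail_words (M := M) t ht.le hb
      (fun b => ¬ M < (Finset.univ.filter (fun l => b l = true)).card) (fun b h => not_lt.1 h)
    rw [abs_sub_comm]
    nth_rewrite 1 [← hs]
    rw [← Finset.sum_sub_distrib]
    have : ∀ b : Fin (2 * M) → Bool, (∏ l, (if b l = true then (1 + t) / 2 else (1 - t) / 2)) -
       (if M < (Finset.univ.filter (fun l => b l = true)).card then
         ∏ l, (if b l = true then (1 + t) / 2 else (1 - t) / 2) else 0) =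
        if ¬ M < (Finset.univ.filter (fun l => b l = true)).card then
         ∏ l, (if b l = true then (1 + t) / 2 else (1 - t) / 2) else 0 := by
      intro b; split_ifs <;> simp
    simp only [this]
    rw [abs_of_nonneg]
    · refine le_trans (le_of_eq ?_) ht2
      refine Finset.sum_congr rfl fun b _ => ?_
      congr
    · refine Finset.sum_nonneg fun b _ => ?_
      split_ifs <;> simp [hnn]
  · have ht' : t ≤ 0 := not_lt.1 ht
    rw [sub_zero, abs_of_nonneg]
    swap
    · refine Finset.sum_nonneg fun b _ => ?_
      split_ifs <;> simp [hnn]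
    have ha : |t| = -t := abs_of_nonpos ht'
    rw [ha] at hb ⊢
    have ht2 := tail_words (M := M) (-t) (by linarith) hb
      (fun b => M < (Finset.univ.filter (fun l => (!b l) = true)).card) (fun b h => by
        have hc := Finset.card_filter_add_card_filter_not
          (s := (Finset.univ : Finset (Fin (2*M)))) (fun l => b l = true)
        simp only [Finset.card_univ, Fintype.card_fin] at hc
        simp at h hc ⊢
        omega)
    refine le_trans (le_of_eq ?_) ht2
    refine Fintype.sum_equiv (Equiv.piCongrRight fun _ => Equiv.boolNot) _ _ fun b => ?_
    simp
    congr 1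
    refine Finset.prod_congr rfl fun l _ => ?_
    cases b l <;> simp <;> ring

lemma Phi_lip {d N : ℕ} {x y : EuclideanSpace ℝ (Fin d)} (hx : ‖x‖ ≤ 1) (hy : ‖y‖ ≤ 1) :
    ‖Phi N x - Phi N y‖ ^ 2 ≤ N * ‖x - y‖ := by
  have hpow : ∀ u v : ℝ, |u| ≤ 1 → |v| ≤ 1 → u ^ N - v ^ N ≤ N * |u - v| := by
    intro u v hu hv
    have h := abs_pow_sub_pow_le u v N
    have h3 : max |u| |v| ^ (N - 1) ≤ 1 := pow_le_one₀ (by positivity) (max_le hu hv)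
    have h4 := le_abs_self (u ^ N - v ^ N)
    have h5 : |u - v| * N * max |u| |v| ^ (N - 1) ≤ |u - v| * N * 1 := by gcongr
    linarith
  have hh : ∀ {x y : EuclideanSpace ℝ (Fin d)}, ‖x‖ ≤ 1 → ‖y‖ ≤ 1 → |(1 + ⟪x, y⟫) / 2| ≤ 1 := by
    intro x y hx hy
    have := abs_le.1 (inner_bd hx hy)
    rw [abs_le]; constructor <;> linarith
  have e : ‖Phi N x - Phi N y‖ ^ 2 = (((1 + ⟪x, x⟫) / 2) ^ N - ((1 + ⟪x, y⟫) / 2) ^ N)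
      + (((1 + ⟪y, y⟫) / 2) ^ N - ((1 + ⟪x, y⟫) / 2) ^ N) := by
    rw [norm_sub_sq_real, ← real_inner_self_eq_norm_sq, ← real_inner_self_eq_norm_sq]
    simp only [inner_Phi]; ring
  rw [e]
  have a1 := hpow _ _ (hh hx hx) (hh hx hy)
  have a2 := hpow _ _ (hh hy hy) (hh hx hy)
  have b1 : |(1 + ⟪x, x⟫) / 2 - (1 + ⟪x, y⟫) / 2| ≤ ‖x - y‖ / 2 := by
    have : (1 + ⟪x, x⟫) / 2 - (1 + ⟪x, y⟫) / 2 = ⟪x, x - y⟫ / 2 := by rw [inner_sub_right]; ring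
    rw [this, abs_div, abs_two]
    have := abs_real_inner_le_norm x (x - y)
    nlinarith [norm_nonneg (x - y)]
  have b2 : |(1 + ⟪y, y⟫) / 2 - (1 + ⟪x, y⟫) / 2| ≤ ‖x - y‖ / 2 := by
    have : (1 + ⟪y, y⟫) / 2 - (1 + ⟪x, y⟫) / 2 = - (⟪x - y, y⟫ / 2) := by rw [inner_sub_left]; ring
    rw [this, abs_neg, abs_div, abs_two]
    have := abs_real_inner_le_norm (x - y) y
    nlinarith [norm_nonneg (x - y)]
  have hN : (0 : ℝ) ≤ N := Nat.cast_nonneg N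
  nlinarith [mul_le_mul_of_nonneg_left b1 hN, mul_le_mul_of_nonneg_left b2 hN]

lemma greedy {H : Type*} [NormedAddCommGroup H] [InnerProductSpace ℝ H] {n : ℕ} (hn : 0 < n)
    (F : Fin n → H) (hF : ∀ i, ‖F i‖ ≤ 1) (μ : H) (hμ : μ = (n : ℝ)⁻¹ • ∑ i, F i) (s : ℕ) :
    ∃ f : Fin s → Fin n, ‖∑ j, (F (f j) - μ)‖ ^ 2 ≤ 4 * s := by
  have hn' : (0 : ℝ) < n := by exact_mod_cast hn
  have hμ1 : ‖μ‖ ≤ 1 := by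
    rw [hμ, norm_smul, norm_inv, Real.norm_natCast, inv_mul_le_iff₀ hn', mul_one]
    refine (norm_sum_le _ _).trans ?_
    refine (Finset.sum_le_card_nsmul _ _ 1 fun i _ => hF i).trans ?_
    simp
  induction s with
  | zero => exact ⟨fun j => j.elim0, by simp⟩
  | succ s ih =>
    obtain ⟨f, hf⟩ := ih
    set v := ∑ j, (F (f j) - μ)
    have : ∃ i, ⟪v, F i - μ⟫ ≤ 0 := by
      by_contra! h
      have h0 : 0 < ∑ i, ⟪v, F i - μ⟫ :=
        Finset.sum_pos (fun i _ => h i) ⟨⟨0, hn⟩, Finset.mem_univ _⟩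
      rw [← inner_sum, Finset.sum_sub_distrib] at h0
      have : ∑ i : Fin n, μ = ∑ i, F i := by
        rw [Finset.sum_const, Finset.card_univ, Fintype.card_fin, ← Nat.cast_smul_eq_nsmul ℝ, hμ,
          smul_inv_smul₀ hn'.ne']
      simp [this] at h0
    obtain ⟨i, hi⟩ := this
    refine ⟨Fin.snoc f i, ?_⟩
    rw [Fin.sum_univ_castSucc]
    simp only [Fin.snoc_castSucc, Fin.snoc_last]
    change ‖v + (F i - μ)‖ ^ 2 ≤ _
    rw [norm_add_sq_real]
    have h2 : ‖F i - μ‖ ≤ 2 := (norm_sub_le _ _).trans (by linarith [hF i])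
    push_cast
    nlinarith [norm_nonneg (F i - μ)]

noncomputable def ew {R : Type} [Fintype R] (a : ℝ) (q : R → ℝ) (r : R) : ℝ :=
  Real.exp (-(a * q r)) / ∑ r', Real.exp (-(a * q r'))

lemma ew_den_pos {R : Type} [Fintype R] [Nonempty R] (a : ℝ) (q : R → ℝ) :
    0 < ∑ r', Real.exp (-(a * q r')) :=
  Finset.sum_pos (fun _ _ => Real.exp_pos _) Finset.univ_nonempty

lemma ew_nonneg {R : Type} [Fintype R] [Nonempty R] (a : ℝ) (q : R → ℝ) (r : R) : 0 ≤ ew a q r :=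
  div_nonneg (Real.exp_pos _).le (ew_den_pos a q).le

lemma ew_sum {R : Type} [Fintype R] [Nonempty R] (a : ℝ) (q : R → ℝ) : ∑ r, ew a q r = 1 := by
  simp only [ew]
  rw [← Finset.sum_div, div_self (ew_den_pos a q).ne']

lemma ew_dp {R : Type} [Fintype R] [Nonempty R] {a Δ : ℝ} (ha : 0 ≤ a) {q q' : R → ℝ}
    (h : ∀ r, |q r - q' r| ≤ Δ) (r : R) : ew a q r ≤ Real.exp (2 * a * Δ) * ew a q' r := by
  have key : ∀ {q q' : R → ℝ}, (∀ r, |q r - q' r| ≤ Δ) → ∀ r,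
      Real.exp (-(a * q r)) ≤ Real.exp (a * Δ) * Real.exp (-(a * q' r)) := by
    intro q q' h r
    rw [← Real.exp_add, Real.exp_le_exp]
    have := (abs_le.1 (h r)).1
    nlinarith
  have h1 := key h r
  have h2 : ∑ r, Real.exp (-(a * q' r)) ≤ Real.exp (a * Δ) * ∑ r, Real.exp (-(a * q r)) := by
    rw [Finset.mul_sum]
    exact Finset.sum_le_sum fun r _ => key (fun r => by rw [abs_sub_comm]; exact h r) r
  have e : Real.exp (2 * a * Δ) = Real.exp (a * Δ) * Real.exp (a * Δ) := by
    rw [← Real.exp_add]; congr 1; ring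
  unfold ew
  rw [← mul_div_assoc, div_le_div_iff₀ (ew_den_pos a q) (ew_den_pos a q'), e]
  calc _ ≤ (Real.exp (a * Δ) * Real.exp (-(a * q' r))) *
        (Real.exp (a * Δ) * ∑ r, Real.exp (-(a * q r))) :=
        mul_le_mul h1 h2 (ew_den_pos a q').le (by positivity)
    _ = _ := by ring

lemma ew_util {R : Type} [Fintype R] [Nonempty R] {a σ δ : ℝ} (ha : 0 ≤ a) {q : R → ℝ} (r₀ : R)
    (h : q r₀ ≤ σ) :
    ∑ r, (if σ + δ < q r then ew a q r else 0) ≤ Fintype.card R * Real.exp (-(a * δ)) := by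
  have : ∀ r, (if σ + δ < q r then ew a q r else 0) ≤ Real.exp (-(a * δ)) := by
    intro r
    split_ifs with hr
    · unfold ew
      rw [div_le_iff₀ (ew_den_pos a q)]
      calc Real.exp (-(a * q r)) ≤ Real.exp (-(a * δ)) * Real.exp (-(a * q r₀)) := by
            rw [← Real.exp_add, Real.exp_le_exp]
            nlinarith
        _ ≤ _ := by
            gcongr
            exact Finset.single_le_sum (f := fun r' => Real.exp (-(a * q r')))
              (fun _ _ => (Real.exp_pos _).le) (Finset.mem_univ r₀)
    · positivity
  refine (Finset.sum_le_sum fun r _ => this r).trans ?_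
  simp

noncomputable def encR {R : Type} [Fintype R] (r : R) : Fin 1 → ℝ :=
  fun _ => ((Fintype.equivFin R r : ℕ) : ℝ)

lemma encR_inj {R : Type} [Fintype R] : Function.Injective (encR (R := R)) := by
  intro r r' h
  have := congrFun h 0
  simp only [encR, Nat.cast_inj] at this
  exact (Fintype.equivFin R).injective (Fin.ext this)

noncomputable def mech {R : Type} [Fintype R] (w : R → ℝ) : Measure (Fin 1 → ℝ) :=
  ∑ r, ENNReal.ofReal (w r) • Measure.dirac (encR r)

lemma mech_apply {R : Type} [Fintype R] (w : R → ℝ) (S : Set (Fin 1 → ℝ)) :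
    mech w S = ∑ r, if encR r ∈ S then ENNReal.ofReal (w r) else 0 := by
  simp only [mech, Measure.finsetSum_apply, Measure.smul_apply, Measure.dirac_apply, smul_eq_mul]
  refine Finset.sum_congr rfl fun r _ => ?_
  split_ifs with h <;> simp [h]

/-- grid points -/
noncomputable def pt {d : ℕ} (G : ℕ) (k : Fin d → Fin (2 * G + 1)) : EuclideanSpace ℝ (Fin d) :=
  WithLp.toLp 2 (fun j => (((k j : ℕ) : ℝ) - G) / G)

lemma round1 {G : ℕ} (hG : 0 < G) (t : ℝ) (ht : |t| ≤ 1) : ∃ k : Fin (2 * G + 1),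
    |(((k : ℕ) : ℝ) - G) / G| ≤ |t| ∧ |t - (((k : ℕ) : ℝ) - G) / G| ≤ 1 / G := by
  have hG' : (0 : ℝ) < G := by exact_mod_cast hG
  have hf : ⌊(G : ℝ) * |t|⌋₊ ≤ G := by
    apply Nat.floor_le_of_le
    nlinarith
  have h1 : (⌊(G : ℝ) * |t|⌋₊ : ℝ) ≤ G * |t| := Nat.floor_le (by positivity)
  have h2 : (G : ℝ) * |t| < ⌊(G : ℝ) * |t|⌋₊ + 1 := Nat.lt_floor_add_one _
  set f := ⌊(G : ℝ) * |t|⌋₊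
  rcases le_total 0 t with h | h
  · refine ⟨⟨G + f, by omega⟩, ?_, ?_⟩
    · simp only [Nat.cast_add, add_sub_cancel_left]
      rw [abs_of_nonneg (by positivity), div_le_iff₀ hG']; linarith
    · simp only [Nat.cast_add, add_sub_cancel_left]
      rw [abs_of_nonneg h] at h1 h2
      have : t - f / G = (G * t - f) / G := by field_simp
      rw [this, abs_of_nonneg (div_nonneg (by linarith) hG'.le)]
      gcongr; linarith
  · refine ⟨⟨G - f, by omega⟩, ?_, ?_⟩
    · simp only [Nat.cast_sub hf]
      have : ((G : ℝ) - f - G) / G = - (f / G) := by ring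
      rw [this, abs_neg, abs_of_nonneg (by positivity), div_le_iff₀ hG']; linarith
    · simp only [Nat.cast_sub hf]
      rw [abs_of_nonpos h] at h1 h2
      have : t - ((G : ℝ) - f - G) / G = - ((G * (-t) - f) / G) := by field_simp; ring
      rw [this, abs_neg, abs_of_nonneg (div_nonneg (by linarith) hG'.le)]
      gcongr; linarith

lemma roundE {d G : ℕ} (hG : 0 < G) (x : EuclideanSpace ℝ (Fin d)) (hx : ‖x‖ ≤ 1) :
    ∃ k : Fin d → Fin (2 * G + 1), ‖pt G k‖ ≤ 1 ∧ ‖x - pt G k‖ ≤ d / G := by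
  have hG' : (0 : ℝ) < G := by exact_mod_cast hG
  have hc : ∀ j, |x j| ≤ 1 := fun j => (PiLp.norm_apply_le x j).trans hx
  choose k hk1 hk2 using fun j => round1 hG (x j) (hc j)
  refine ⟨k, ?_, ?_⟩
  · refine le_trans ?_ hx
    rw [EuclideanSpace.norm_eq, EuclideanSpace.norm_eq]
    gcongr with j
    exact hk1 j
  · rw [EuclideanSpace.norm_eq]
    apply Real.sqrt_le_iff.2
    refine ⟨by positivity, ?_⟩
    have : ∀ j ∈ Finset.univ, ‖(x - pt G k) j‖ ^ 2 ≤ (1 / (G : ℝ)) ^ 2 := by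
      intro j _
      gcongr
      exact hk2 j
    refine (Finset.sum_le_card_nsmul _ _ _ this).trans ?_
    simp only [Finset.card_univ, Fintype.card_fin, nsmul_eq_mul]
    rw [div_pow, div_pow, one_pow, mul_one_div]
    gcongr
    exact_mod_cast Nat.le_self_pow (by norm_num) d

lemma exists_enum {X : Type*} {n : ℕ} (D : Multiset X) (h : D.card = n) :
    ∃ g : Fin n → X, D = Finset.univ.val.map g := by
  induction D using Quot.inductionOn with
  | _ l =>
    have h' : l.length = n := h
    subst h'
    refine ⟨l.get, ?_⟩
    rw [Fin.univ_val_map, List.ofFn_get]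
    rfl

noncomputable def muD {d : ℕ} (n N : ℕ) (D : Multiset (EuclideanSpace ℝ (Fin d))) :=
  (n : ℝ)⁻¹ • (D.map (Phi N)).sum

noncomputable def Zr {d s G : ℕ} (N : ℕ) (r : Fin s → Fin d → Fin (2 * G + 1)) :=
  (s : ℝ)⁻¹ • ∑ j, Phi N (pt G (r j))

lemma exists_good {d N P n : ℕ} (hd : 0 < d) (hN : 0 < N) (hP : 0 < P) (hn : 0 < n)
    (D : Multiset (EuclideanSpace ℝ (Fin d))) (hD : D.card = n) (hu : ∀ x ∈ D, ‖x‖ = 1) :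
    ∃ r : Fin (P ^ 2) → Fin d → Fin (2 * (d * N * P ^ 2) + 1), ‖Zr N r - muD n N D‖ ≤ 3 / P := by
  obtain ⟨g, rfl⟩ := exists_enum D hD
  have hg : ∀ i, ‖g i‖ = 1 := fun i => hu _ (Multiset.mem_map_of_mem g (Finset.mem_univ_val i))
  have hμ : muD n N (Finset.univ.val.map g) = (n : ℝ)⁻¹ • ∑ i, Phi N (g i) := by
    rw [muD, Multiset.map_map]; rfl
  set μ := muD n N (Finset.univ.val.map g)
  obtain ⟨f, hf⟩ := greedy hn (fun i => Phi N (g i)) (fun i => norm_Phi_le (hg i).le) μ hμ (P ^ 2)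
  have hG : 0 < d * N * P ^ 2 := by positivity
  choose k hk1 hk2 using fun i => roundE hG (g i) (hg i).le
  refine ⟨fun j => k (f j), ?_⟩
  have hP' : (0 : ℝ) < P := by exact_mod_cast hP
  have hd' : (0 : ℝ) < d := by exact_mod_cast hd
  have hN' : (0 : ℝ) < N := by exact_mod_cast hN
  have hr : ∀ i, ‖Phi N (pt _ (k i)) - Phi N (g i)‖ ≤ 1 / P := by
    intro i
    have h1 := Phi_lip (N := N) (hg i).le (hk1 i)
    rw [norm_sub_rev]
    apply le_of_sq_le_sq _ (by positivity)
    refine h1.trans ?_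
    calc (N : ℝ) * _ ≤ N * ((d : ℝ) / (d * N * P ^ 2 : ℕ)) := by gcongr; exact hk2 i
      _ = (1 / P) ^ 2 := by push_cast; field_simp
  have hs : ((P ^ 2 : ℕ) : ℝ) = (P : ℝ) ^ 2 := by push_cast; ring
  have e : Zr N (fun j => k (f j)) - μ = ((P : ℝ) ^ 2)⁻¹ •
      ((∑ j, (Phi N (pt _ (k (f j))) - Phi N (g (f j)))) + ∑ j, (Phi N (g (f j)) - μ)) := by
    rw [← Finset.sum_add_distrib]
    simp only [sub_add_sub_cancel]
    rw [Finset.sum_sub_distrib, Finset.sum_const, Finset.card_univ, Fintype.card_fin,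
      ← Nat.cast_smul_eq_nsmul ℝ, hs, smul_sub, inv_smul_smul₀ (by positivity), Zr, hs]
  have b1 : ‖∑ j, (Phi N (pt _ (k (f j))) - Phi N (g (f j)))‖ ≤ P := by
    refine (norm_sum_le _ _).trans ?_
    refine (Finset.sum_le_card_nsmul _ _ _ fun j _ => hr (f j)).trans ?_
    simp only [Finset.card_univ, Fintype.card_fin, nsmul_eq_mul, hs]
    apply le_of_eq; field_simp
  have b2 : ‖∑ j, (Phi N (g (f j)) - μ)‖ ≤ 2 * P := by
    apply le_of_sq_le_sq _ (by positivity)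
    refine hf.trans (le_of_eq ?_)
    rw [hs]; ring
  rw [e, norm_smul, norm_inv, Real.norm_of_nonneg (by positivity)]
  calc _ ≤ ((P : ℝ) ^ 2)⁻¹ * (P + 2 * P) := by
        gcongr
        exact (norm_add_le _ _).trans (add_le_add b1 b2)
    _ = 3 / P := by field_simp; ring

lemma muD_sens {d N n : ℕ} (D D' : Multiset (EuclideanSpace ℝ (Fin d)))
    (hu : ∀ x ∈ D, ‖x‖ = 1) (hu' : ∀ x ∈ D', ‖x‖ = 1) (h : Neighbor D D') :
    ‖muD n N D - muD n N D'‖ ≤ 2 / n := by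
  obtain ⟨D₀, x, y, rfl, rfl⟩ := h
  have hx := norm_Phi_le (N := N) (hu x (Multiset.mem_cons_self _ _)).le
  have hy := norm_Phi_le (N := N) (hu' y (Multiset.mem_cons_self _ _)).le
  simp only [muD, Multiset.map_cons, Multiset.sum_cons]
  rw [← smul_sub, add_sub_add_right_eq_sub, norm_smul, norm_inv, Real.norm_natCast, div_eq_inv_mul]
  gcongr
  exact (norm_sub_le _ _).trans (by linarith)

lemma hquery_approx {d M n : ℕ} (hn : 0 < n) (D : Multiset (EuclideanSpace ℝ (Fin d)))
    (hD : D.card = n) (hu : ∀ x ∈ D, ‖x‖ = 1) (y : EuclideanSpace ℝ (Fin d)) (hy : ‖y‖ = 1)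
    {γ : ℝ} (hγ : 0 < γ) (hm : ∀ x ∈ D, γ ≤ |⟪x, y⟫|) :
    |⟪muD n (2 * M) D, wvec M y⟫ - hquery y D| ≤ Real.exp (- (γ ^ 2 * M)) := by
  have hn' : (0 : ℝ) < n := by exact_mod_cast hn
  have e1 : hquery y D = (n : ℝ)⁻¹ * (D.map (fun x => if 0 < ⟪x, y⟫ then (1 : ℝ) else 0)).sum := by
    rw [hquery, hD, div_eq_inv_mul]
    congr 1
    induction D using Multiset.induction_on generalizing n with
    | empty => simp
    | cons a D ih => 
      clear ih hD hn hn' hu hm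
      induction (a ::ₘ D) using Multiset.induction_on with
      | empty => simp
      | cons b D ih =>
        rw [Multiset.filter_cons, Multiset.map_cons, Multiset.sum_cons, ← ih]
        split_ifs <;> simp
        ring
  obtain ⟨g, rfl⟩ := exists_enum D hD
  have hg : ∀ i, ‖g i‖ = 1 := fun i => hu _ (Multiset.mem_map_of_mem g (Finset.mem_univ_val i))
  have hgm : ∀ i, γ ≤ |⟪g i, y⟫| := fun i => hm _ (Multiset.mem_map_of_mem g (Finset.mem_univ_val i))
  have hμ : muD n (2 * M) (Finset.univ.val.map g) = (n : ℝ)⁻¹ • ∑ i, Phi (2 * M) (g i) := by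
    rw [muD, Multiset.map_map]; rfl
  have e2 : (Multiset.map (fun x => if 0 < ⟪x, y⟫ then (1 : ℝ) else 0)
      (Finset.univ.val.map g)).sum = ∑ i, if 0 < ⟪g i, y⟫ then (1 : ℝ) else 0 := by
    rw [Multiset.map_map]; rfl
  rw [e1, e2, hμ, real_inner_smul_left, sum_inner, ← mul_sub, ← Finset.sum_sub_distrib, abs_mul,
    abs_of_pos (inv_pos.2 hn'), inv_mul_le_iff₀ hn']
  refine (Finset.abs_sum_le_sum_abs _ _).trans ?_
  refine (Finset.sum_le_card_nsmul _ _ _ fun i _ => approx (hg i) hy hγ (hgm i)).trans ?_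
  simp

lemma core {d M P n : ℕ} (hd : 0 < d) (hM : 0 < M) (hP : 0 < P) (hn : 0 < n) {γ α β ε : ℝ}
    (hγ : 0 < γ) (hα : 0 < α) (hβ : 0 < β) (hε : 0 < ε)
    (hPα : 16 * 2 ^ (2 * M) ≤ P * α) (hMα : Real.exp (- (γ ^ 2 * M)) ≤ α / 2)
    (hnb : P * (d * P ^ 2 * Real.log (2 * (d * (2 * M) * P ^ 2) + 1) + Real.log (1 / β)) ≤ ε * n) :
    ∃ (k : ℕ), 0 < k ∧
      ∃ (A : Multiset (EuclideanSpace ℝ (Fin d)) → Measure (Fin k → ℝ))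
        (Eval : (Fin k → ℝ) → EuclideanSpace ℝ (Fin d) → ℝ),
        (∀ D, IsProbabilityMeasure (A D)) ∧
        (∀ D D' : Multiset (EuclideanSpace ℝ (Fin d)), D.card = n → D'.card = n →
          (∀ x ∈ D, ‖x‖ = 1) → (∀ x ∈ D', ‖x‖ = 1) → Neighbor D D' →
          ∀ S : Set (Fin k → ℝ), MeasurableSet S →
            A D S ≤ ENNReal.ofReal (Real.exp ε) * A D' S) ∧
        (∀ D : Multiset (EuclideanSpace ℝ (Fin d)), D.card = n → (∀ x ∈ D, ‖x‖ = 1) →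
          1 - ENNReal.ofReal β ≤
            A D {o | ∀ y : EuclideanSpace ℝ (Fin d), ‖y‖ = 1 →
              (∀ x ∈ D, γ ≤ |⟪x, y⟫|) → |Eval o y - hquery y D| ≤ α}) := by
  have hn' : (0 : ℝ) < n := by exact_mod_cast hn
  have hP' : (0 : ℝ) < P := by exact_mod_cast hP
  let R := Fin (P ^ 2) → Fin d → Fin (2 * (d * (2 * M) * P ^ 2) + 1)
  let q : Multiset (EuclideanSpace ℝ (Fin d)) → R → ℝ := fun D r =>
    ‖Zr (2 * M) r - muD n (2 * M) D‖
  let a : ℝ := ε * n / 4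
  have ha : 0 ≤ a := by positivity
  let dec : (Fin 1 → ℝ) → R := Function.invFun encR
  have hdec : ∀ r : R, dec (encR r) = r := Function.leftInverse_invFun encR_inj
  refine ⟨1, one_pos, fun D => mech (ew a (q D)), fun o y => ⟪Zr (2 * M) (dec o), wvec M y⟫,
    ?_, ?_, ?_⟩
  · intro D
    constructor
    rw [mech_apply]
    simp only [Set.mem_univ, if_true]
    rw [← ENNReal.ofReal_sum_of_nonneg fun r _ => ew_nonneg a _ r, ew_sum, ENNReal.ofReal_one]
  · intro D D' _ _ hu hu' hN S _
    rw [mech_apply, mech_apply, Finset.mul_sum]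
    refine Finset.sum_le_sum fun r _ => ?_
    split_ifs
    · rw [← ENNReal.ofReal_mul (Real.exp_pos _).le]
      apply ENNReal.ofReal_le_ofReal
      have := ew_dp (Δ := 2 / n) ha (q := q D) (q' := q D') (fun r => by
        refine (abs_norm_sub_norm_le _ _).trans ?_
        rw [sub_sub_sub_cancel_left, norm_sub_rev]
        exact muD_sens D D' hu hu' hN) r
      have e : 2 * a * (2 / n) = ε := by simp only [a]; field_simp; ring
      rwa [e] at this
    · simp
  · intro D hD hu
    obtain ⟨r₀, hr₀⟩ := exists_good hd (N := 2 * M) (by omega) hP hn D hD hu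
    have hut := ew_util (δ := 4 / P) ha (q := q D) r₀ hr₀
    have hcard : (Fintype.card R : ℝ) * Real.exp (-(a * (4 / P))) ≤ β := by
      have hc : (Fintype.card R : ℝ) =
          Real.exp (d * P ^ 2 * Real.log (2 * (d * (2 * M) * P ^ 2) + 1)) := by
        have hx : Real.exp (d * P ^ 2 * Real.log (2 * (d * (2 * M) * P ^ 2) + 1)) =
            (2 * (d * (2 * M) * P ^ 2) + 1 : ℝ) ^ (d * P ^ 2) := by
          rw [← Real.exp_log (x := (2 * (d * (2 * M) * P ^ 2) + 1 : ℝ)) (by positivity),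
            ← Real.exp_nat_mul, Real.exp_log (by positivity)]
          push_cast
          rfl
        rw [hx]
        simp only [R, Fintype.card_fun, Fintype.card_fin]
        push_cast
        rw [← pow_mul]
      rw [hc, ← Real.exp_add, ← Real.le_log_iff_exp_le hβ]
      have e : a * (4 / P) = ε * n / P := by simp only [a]; field_simp
      have h2 : d * P ^ 2 * Real.log (2 * (d * (2 * M) * P ^ 2) + 1) + Real.log (1 / β)
          ≤ ε * n / P := by
        rw [le_div_iff₀ hP']; linarith
      rw [one_div, Real.log_inv] at h2
      rw [e]; linarith
    have hgood : ∀ r : R, q D r ≤ 3 / P + 4 / P → encR r ∈ {o : Fin 1 → ℝ |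
        ∀ y : EuclideanSpace ℝ (Fin d), ‖y‖ = 1 →
          (∀ x ∈ D, γ ≤ |⟪x, y⟫|) → |⟪Zr (2 * M) (dec o), wvec M y⟫ - hquery y D| ≤ α} := by
      intro r hr y hy hm
      rw [hdec]
      have h1 := hquery_approx (M := M) hn D hD hu y hy hγ hm
      have h2 : |⟪Zr (2 * M) r, wvec M y⟫ - ⟪muD n (2 * M) D, wvec M y⟫| ≤ α / 2 := by
        rw [← inner_sub_left]
        refine (abs_real_inner_le_norm _ _).trans ?_
        calc _ ≤ (3 / (P : ℝ) + 4 / P) * 2 ^ (2 * M) := by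
              gcongr
              exact norm_wvec_le hy
          _ ≤ α / 2 := by
              rw [← add_div, div_mul_eq_mul_div, div_le_iff₀ hP']
              have : (0 : ℝ) < 2 ^ (2 * M) := by positivity
              linarith
      have := abs_sub_le (⟪Zr (2 * M) r, wvec M y⟫) (⟪muD n (2 * M) D, wvec M y⟫) (hquery y D)
      linarith
    rw [mech_apply]
    have hsum : 1 - β ≤ ∑ r, if q D r ≤ 3 / P + 4 / P then ew a (q D) r else 0 := by
      have h1 := ew_sum a (q D)
      have h2 : ∑ r, ew a (q D) r = ∑ r, (if q D r ≤ 3 / P + 4 / P then ew a (q D) r else 0) +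
          ∑ r, (if 3 / P + 4 / P < q D r then ew a (q D) r else 0) := by
        rw [← Finset.sum_add_distrib]
        refine Finset.sum_congr rfl fun r _ => ?_
        by_cases h : q D r ≤ 3 / P + 4 / P
        · rw [if_pos h, if_neg (not_lt.2 h), add_zero]
        · rw [if_neg h, if_pos (not_le.1 h), zero_add]
      linarith
    calc 1 - ENNReal.ofReal β = ENNReal.ofReal (1 - β) := by
          rw [ENNReal.ofReal_sub _ hβ.le, ENNReal.ofReal_one]
      _ ≤ ENNReal.ofReal (∑ r, if q D r ≤ 3 / P + 4 / P then ew a (q D) r else 0) :=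
          ENNReal.ofReal_le_ofReal hsum
      _ = ∑ r, ENNReal.ofReal (if q D r ≤ 3 / P + 4 / P then ew a (q D) r else 0) :=
          ENNReal.ofReal_sum_of_nonneg fun r _ => by
            split_ifs
            · exact ew_nonneg _ _ _
            · exact le_rfl
      _ ≤ _ := by
          refine Finset.sum_le_sum fun r _ => ?_
          by_cases h : q D r ≤ 3 / P + 4 / P
          · rw [if_pos h, if_pos (hgood r h)]
          · rw [if_neg h]; simp

set_option maxHeartbeats 2000000 in
theorem stmt15 :
    ∃ c : ℝ, 0 < c ∧
      ∀ d : ℕ, 1 ≤ d → ∀ γ α β ε : ℝ,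
        0 < γ → γ < 1 / 2 → 0 < α → α < 1 / 2 → 0 < β → β < 1 / 2 → 0 < ε → ε < 1 / 2 →
      ∀ T m : ℕ,
        T = ⌈320 / γ ^ 2 * Real.log (8 / α)⌉₊ →
        m = ⌈16 / α ^ 2 * d * (Real.log (4 * Real.sqrt d / γ) + Real.log (1 / β))⌉₊ →
      ∀ n : ℕ,
        (n : ℝ) ≥ c * m / ε * (8 * Real.sqrt T / γ) ^ T *
          Real.log (2 * m * (8 * Real.sqrt T / γ) ^ T / β) →
      ∃ (k : ℕ), 0 < k ∧
      ∃ (A : Multiset (EuclideanSpace ℝ (Fin d)) → Measure (Fin k → ℝ))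
        (Eval : (Fin k → ℝ) → EuclideanSpace ℝ (Fin d) → ℝ),
        -- A(D) is a probability distribution on ℝ^k
        (∀ D, IsProbabilityMeasure (A D)) ∧
        -- A is ε-differentially private on size-n databases of unit vectors
        (∀ D D' : Multiset (EuclideanSpace ℝ (Fin d)), D.card = n → D'.card = n →
          (∀ x ∈ D, ‖x‖ = 1) → (∀ x ∈ D', ‖x‖ = 1) → Neighbor D D' →
          ∀ S : Set (Fin k → ℝ), MeasurableSet S →
            A D S ≤ ENNReal.ofReal (Real.exp ε) * A D' S) ∧
        -- with probability at least 1 − β over o = A(D), every unit vector y whose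
        -- halfspace query has margin γ with respect to D is answered within α by Eval
        (∀ D : Multiset (EuclideanSpace ℝ (Fin d)), D.card = n → (∀ x ∈ D, ‖x‖ = 1) →
          1 - ENNReal.ofReal β ≤
            A D {o | ∀ y : EuclideanSpace ℝ (Fin d), ‖y‖ = 1 →
              (∀ x ∈ D, γ ≤ |⟪x, y⟫|) → |Eval o y - hquery y D| ≤ α}) := by
  refine ⟨1, one_pos, ?_⟩
  intro d hd γ α β ε hγ hγ' hα hα' hβ hβ' hε hε' T m hT hm n hn
  have hd' : (1 : ℝ) ≤ d := by exact_mod_cast hd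
  have hl2 := Real.log_two_gt_d9
  have he1 := Real.exp_one_gt_d9
  have he2 := Real.exp_one_lt_d9
  -- the basic quantity
  obtain ⟨A, hA⟩ : ∃ A : ℝ, A = 1 / γ ^ 2 * Real.log (8 / α) := ⟨_, rfl⟩
  have hlog16 : 2.7 ≤ Real.log (8 / α) := by
    have h16 : Real.log 16 = 4 * Real.log 2 := by
      rw [show (16 : ℝ) = 2 ^ 4 by norm_num, Real.log_pow]; norm_num
    have : Real.log 16 ≤ Real.log (8 / α) := by
      apply Real.log_le_log (by norm_num)
      rw [le_div_iff₀ hα]; linarith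
    linarith
  have hγ2 : γ ^ 2 ≤ 1 / 4 := by nlinarith
  have hγ2p : 0 < γ ^ 2 := by positivity
  have hγA : γ ^ 2 * A = Real.log (8 / α) := by rw [hA]; field_simp
  have hA10 : 10 ≤ A := by
    by_contra! h
    nlinarith
  have hα8 : 8 / α ≤ Real.exp A := by
    rw [← Real.log_le_iff_le_exp (by positivity), ← hγA]
    nlinarith
  have hT320 : 320 * A ≤ T := by
    rw [hT]
    refine le_trans (le_of_eq ?_) (Nat.le_ceil _)
    rw [hA]; ring
  obtain ⟨M, hMdef⟩ : ∃ M : ℕ, M = ⌈A⌉₊ := ⟨_, rfl⟩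
  have hM1 : A ≤ M := hMdef ▸ Nat.le_ceil _
  have hM2 : (M : ℝ) ≤ 2 * A := by
    have := Nat.ceil_lt_add_one (show 0 ≤ A by linarith)
    rw [← hMdef] at this; linarith
  have hMpos : 0 < M := by
    have : (0 : ℝ) < M := by linarith
    exact_mod_cast this
  obtain ⟨P, hPdef⟩ : ∃ P : ℕ, P = ⌈16 * 2 ^ (2 * M) / α⌉₊ := ⟨_, rfl⟩
  have hP1 : 16 * 2 ^ (2 * M) / α ≤ P := hPdef ▸ Nat.le_ceil _
  have hPpos' : (0 : ℝ) < P := lt_of_lt_of_le (by positivity) hP1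
  have hPpos : 0 < P := by exact_mod_cast hPpos'
  have hPone : (1 : ℝ) ≤ P := by exact_mod_cast hPpos
  have hP2 : (P : ℝ) ≤ Real.exp (6 * A) := by
    have h0 : (P : ℝ) < 16 * 2 ^ (2 * M) / α + 1 := by
      rw [hPdef]; exact Nat.ceil_lt_add_one (by positivity)
    have h1 : (2 : ℝ) ^ (2 * M) ≤ Real.exp (4 * A) := by
      calc (2 : ℝ) ^ (2 * M) ≤ (Real.exp 1) ^ (2 * M) := by gcongr; linarith
        _ = Real.exp (2 * M) := by rw [← Real.exp_nat_mul]; push_cast; ring_nf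
        _ ≤ _ := by rw [Real.exp_le_exp]; linarith
    have h2 : 16 * 2 ^ (2 * M) / α ≤ 2 * Real.exp (5 * A) := by
      calc 16 * 2 ^ (2 * M) / α = 2 * (8 / α * 2 ^ (2 * M)) := by ring
        _ ≤ 2 * (Real.exp A * Real.exp (4 * A)) := by gcongr
        _ = _ := by rw [← Real.exp_add]; ring_nf
    have h3 : Real.exp (6 * A) = Real.exp (5 * A) * Real.exp A := by
      rw [← Real.exp_add]; ring_nf
    have h4 := Real.add_one_le_exp A
    have h5 := Real.add_one_le_exp (5 * A)
    rw [h3]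
    nlinarith
  -- the logarithm of the grid
  have hlogG : Real.log (2 * (d * (2 * M) * P ^ 2) + 1) ≤ Real.log d + 14 * A := by
    rw [← Real.log_exp (14 * A), ← Real.log_mul (by linarith) (Real.exp_pos _).ne']
    apply Real.log_le_log (by positivity)
    have h1 : (P : ℝ) ^ 2 ≤ Real.exp (12 * A) := by
      calc (P : ℝ) ^ 2 ≤ Real.exp (6 * A) ^ 2 := by gcongr
        _ = _ := by rw [← Real.exp_nat_mul]; push_cast; ring_nf
    have h2 : 4 * (M : ℝ) + 1 ≤ Real.exp (2 * A) := by
      have e : Real.exp (2 * A) = Real.exp A * Real.exp A := by rw [← Real.exp_add]; ring_nf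
      have h4 := Real.add_one_le_exp A
      rw [e]
      nlinarith
    have h3 : Real.exp (14 * A) = Real.exp (2 * A) * Real.exp (12 * A) := by
      rw [← Real.exp_add]; ring_nf
    rw [h3]
    have hdP : 1 ≤ (d : ℝ) * P ^ 2 := by
      have : (1 : ℝ) ≤ P ^ 2 := one_le_pow₀ hPone
      exact one_le_mul_of_one_le_of_one_le hd' this
    calc (2 * (d * (2 * M) * P ^ 2) + 1 : ℝ) ≤ 2 * (d * (2 * M) * P ^ 2) + d * P ^ 2 := by linarith
      _ = d * ((4 * M + 1) * P ^ 2) := by ring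
      _ ≤ _ := by gcongr
  -- lower bounds on the sample size
  obtain ⟨B, hB⟩ : ∃ B : ℝ, B = (8 * Real.sqrt T / γ) ^ T := ⟨_, rfl⟩
  have hBge : Real.exp (320 * A) ≤ B := by
    have hT1 : (1 : ℝ) ≤ T := by linarith
    have hs : 1 ≤ Real.sqrt T := Real.one_le_sqrt.2 hT1
    have hb : Real.exp 1 ≤ 8 * Real.sqrt T / γ := by
      rw [le_div_iff₀ hγ]
      nlinarith
    calc Real.exp (320 * A) ≤ Real.exp T := Real.exp_le_exp.2 hT320
      _ = Real.exp 1 ^ T := by rw [← Real.exp_nat_mul, mul_one]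
      _ ≤ B := by rw [hB]; gcongr
  have hBpos : 0 < B := lt_of_lt_of_le (Real.exp_pos _) hBge
  have hlb : 0 ≤ Real.log (1 / β) := by
    apply Real.log_nonneg
    rw [le_div_iff₀ hβ]; linarith
  have hld : 0 ≤ Real.log d := Real.log_nonneg hd'
  have hmd : (d : ℝ) ≤ m := by
    rw [hm]
    refine le_trans ?_ (Nat.le_ceil _)
    have h1 : 1 ≤ Real.log (4 * Real.sqrt d / γ) := by
      rw [Real.le_log_iff_exp_le (by positivity), le_div_iff₀ hγ]
      have : 1 ≤ Real.sqrt d := Real.one_le_sqrt.2 hd'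
      nlinarith
    have h2 : 1 ≤ 16 / α ^ 2 := by
      rw [le_div_iff₀ (by positivity)]; nlinarith
    have h3 : (d : ℝ) ≤ 16 / α ^ 2 * d := by nlinarith
    nlinarith
  have hlogB : Real.log d + 320 * A + Real.log (1 / β) ≤ Real.log (2 * m * B / β) := by
    rw [← Real.log_exp (320 * A), ← Real.log_mul (by linarith) (Real.exp_pos _).ne',
      ← Real.log_mul (by positivity) (by positivity), mul_one_div]
    apply Real.log_le_log (by positivity)
    gcongr
    linarith
  have hbig : d * Real.exp (320 * A) * (Real.log d + 320 * A + Real.log (1 / β)) ≤ ε * n := by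
    have h1 : m * B * Real.log (2 * m * B / β) ≤ ε * n := by
      rw [ge_iff_le, ← hB] at hn
      calc m * B * Real.log (2 * m * B / β)
          = ε * (1 * m / ε * B * Real.log (2 * m * B / β)) := by field_simp
        _ ≤ _ := by gcongr
    refine le_trans ?_ h1
    gcongr
  have hnpos : 0 < n := by
    have h0 : 0 < d * Real.exp (320 * A) * (Real.log d + 320 * A + Real.log (1 / β)) := by
      have : 0 < Real.log d + 320 * A + Real.log (1 / β) := by linarith
      positivity
    rcases Nat.eq_zero_or_pos n with h | h
    · rw [h, Nat.cast_zero, mul_zero] at hbig; linarith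
    · exact h
  refine core (M := M) (P := P) (by omega) hMpos hPpos hnpos hγ hα hβ hε ?_ ?_ ?_
  · rwa [div_le_iff₀ hα] at hP1
  · have h1 : Real.exp (- (γ ^ 2 * M)) ≤ Real.exp (- Real.log (8 / α)) := by
      rw [Real.exp_le_exp, ← hγA]
      nlinarith
    rw [← Real.log_inv, Real.exp_log (by positivity), inv_div] at h1
    linarith
  · refine le_trans ?_ hbig
    have hP3 : (P : ℝ) ^ 3 ≤ Real.exp (320 * A) := by
      calc (P : ℝ) ^ 3 ≤ Real.exp (6 * A) ^ 3 := by gcongr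
        _ = Real.exp (18 * A) := by rw [← Real.exp_nat_mul]; push_cast; ring_nf
        _ ≤ _ := by rw [Real.exp_le_exp]; linarith
    have hdP : 1 ≤ (d : ℝ) * P ^ 2 := by
      have : (1 : ℝ) ≤ P ^ 2 := one_le_pow₀ hPone
      exact one_le_mul_of_one_le_of_one_le hd' this
    calc P * (d * P ^ 2 * Real.log (2 * (d * (2 * M) * P ^ 2) + 1) + Real.log (1 / β))
        ≤ P * (d * P ^ 2 * (Real.log d + 320 * A) + d * P ^ 2 * Real.log (1 / β)) := by
          gcongr
          · linarith
          · exact le_mul_of_one_le_left hlb hdP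
      _ = d * P ^ 3 * (Real.log d + 320 * A + Real.log (1 / β)) := by ring
      _ ≤ _ := by gcongr
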